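/- Let (E, (J-R)Q) be a regular DH matrix pair of real n×n matrices, and let λ ∈ ℂ and x ∈ ℂⁿ, x ≠ 0, satisfy (λ • Eℂ - ((J-R)*Q)ℂ) x = 0. Then the Hermitian form xᴴ (Qᵀ * E)ℂ x is a strictly positive real number, and Re(λ) · (xᴴ (Qᵀ * E)ℂ x) = - xᴴ (Qᵀ * R * Q)ℂ x, i.e., Re(λ) = -(xᴴ Qᵀ R Q x)/(xᴴ Qᵀ E x). -/

import Mathlib

open Matrix

/-!
Multiplying the eigenvector equation on the left by `xᴴ Qᵀ` gives
`λ (xᴴ Qᵀ E x) = xᴴ Qᵀ J Q x - xᴴ Qᵀ R Q x`. The first term on the right is purely imaginary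
because `Qᵀ J Q` is skew-symmetric, while `xᴴ Qᵀ E x` and `xᴴ Qᵀ R Q x` are real and nonnegative,
so the formula follows by taking real parts.

For strict positivity: if `xᴴ Qᵀ E x = 0`, semidefiniteness gives `Qᵀ E x = 0`, hence `E x = 0` as
`Q` is invertible, and then `(J - R) Q x = 0` by the eigenvector equation. Thus `x` is a common
kernel vector of `E` and `(J - R) Q`, which makes `det (z E - (J - R) Q)` vanish for every `z`,
against regularity.
-/

open scoped ComplexOrder

open scoped MatrixOrder Matrix.Norms.L2Operator in
/-- Complexification preserves positive semidefiniteness; seen from a factorization `M = Bᵀ B`. -/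
theorem posSemidef_complexification {n : ℕ} {M : Matrix (Fin n) (Fin n) ℝ} (hM : M.PosSemidef) :
    (M.map (algebraMap ℝ ℂ)).PosSemidef := by
  obtain ⟨B, rfl⟩ := CStarAlgebra.nonneg_iff_eq_star_mul_self.mp hM.nonneg
  rw [star_eq_conjTranspose]
  have h : (Bᴴ * B).map (algebraMap ℝ ℂ)
      = (B.map (algebraMap ℝ ℂ))ᴴ * B.map (algebraMap ℝ ℂ) := by
    rw [Matrix.map_mul]
    congr 1
    ext i j
    simp
  rw [h]
  exact Matrix.posSemidef_conjTranspose_mul_self _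

/-- The Hermitian form of a real skew-symmetric matrix is purely imaginary. -/
theorem re_form_eq_zero_of_skew {n : ℕ} {K : Matrix (Fin n) (Fin n) ℝ} (hK : Kᵀ = -K)
    (x : Fin n → ℂ) : (star x ⬝ᵥ (K.map (algebraMap ℝ ℂ) *ᵥ x)).re = 0 := by
  have hC : (K.map (algebraMap ℝ ℂ))ᴴ = -K.map (algebraMap ℝ ℂ) := by
    ext i j
    have := congrFun (congrFun hK i) j
    simp only [transpose_apply] at this
    simp [this]
  have h : star (star x ⬝ᵥ (K.map (algebraMap ℝ ℂ) *ᵥ x))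
      = -(star x ⬝ᵥ (K.map (algebraMap ℝ ℂ) *ᵥ x)) := by
    rw [← star_dotProduct_star, star_star, star_mulVec, hC, ← dotProduct_mulVec, neg_mulVec,
      dotProduct_neg]
  have h' := congrArg Complex.re h
  simp only [Complex.star_def, Complex.conj_re, Complex.neg_re] at h'
  linarith

/-- For a regular DH matrix pair and a finite eigenvalue `lam` with eigenvector `x`, the
Hermitian form `xᴴ (Qᵀ E) x` is a strictly positive real number and
`Re(lam) ⬝ (xᴴ Qᵀ E x) = - xᴴ Qᵀ R Q x`. -/
theorem dh_pair_eigenvalue_real_part_formula {n : ℕ}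
    (E J R Q : Matrix (Fin n) (Fin n) ℝ)
    (hJ : Jᵀ = -J) (hR : R.PosSemidef) (hQ : IsUnit Q)
    (hQE : (Qᵀ * E).PosSemidef)
    (hreg : ∃ z : ℂ,
      (z • E.map (algebraMap ℝ ℂ) - ((J - R) * Q).map (algebraMap ℝ ℂ)).det ≠ 0)
    (lam : ℂ) (x : Fin n → ℂ) (hx : x ≠ 0)
    (heig : (lam • E.map (algebraMap ℝ ℂ) - ((J - R) * Q).map (algebraMap ℝ ℂ)) *ᵥ x = 0) :
    (∃ c : ℝ, 0 < c ∧
        star x ⬝ᵥ ((Qᵀ * E).map (algebraMap ℝ ℂ) *ᵥ x) = (c : ℂ)) ∧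
      (lam.re : ℂ) * (star x ⬝ᵥ ((Qᵀ * E).map (algebraMap ℝ ℂ) *ᵥ x)) =
        -(star x ⬝ᵥ ((Qᵀ * R * Q).map (algebraMap ℝ ℂ) *ᵥ x)) := by
  have hE := posSemidef_complexification hQE
  have hRQ : (Qᵀ * R * Q).PosSemidef := by
    simpa using hR.conjTranspose_mul_mul_same Q
  have hK : (Qᵀ * J * Q)ᵀ = -(Qᵀ * J * Q) := by
    simp [transpose_mul, hJ, Matrix.mul_assoc]
  have hKre := re_form_eq_zero_of_skew hK x
  have hEnn := hE.dotProduct_mulVec_nonneg x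
  have hRnn := (posSemidef_complexification hRQ).dotProduct_mulVec_nonneg x
  have heig' : lam • (E.map (algebraMap ℝ ℂ) *ᵥ x) = ((J - R) * Q).map (algebraMap ℝ ℂ) *ᵥ x := by
    rwa [sub_mulVec, smul_mulVec, sub_eq_zero] at heig
  have hne : star x ⬝ᵥ ((Qᵀ * E).map (algebraMap ℝ ℂ) *ᵥ x) ≠ 0 := by
    intro h0
    rw [hE.dotProduct_mulVec_zero_iff, Matrix.map_mul, ← mulVec_mulVec] at h0
    have hQT : IsUnit (Qᵀ.map (algebraMap ℝ ℂ)) :=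
      ((Matrix.isUnit_transpose Q).mpr hQ).map (algebraMap ℝ ℂ).mapMatrix
    have hEx : E.map (algebraMap ℝ ℂ) *ᵥ x = 0 :=
      Matrix.mulVec_injective_of_isUnit hQT (by rw [h0, mulVec_zero])
    rw [hEx, smul_zero] at heig'
    obtain ⟨z, hz⟩ := hreg
    refine hz (Matrix.exists_mulVec_eq_zero_iff.mp ⟨x, hx, ?_⟩)
    rw [sub_mulVec, smul_mulVec, hEx, ← heig', smul_zero, sub_zero]
  have key : lam * (star x ⬝ᵥ ((Qᵀ * E).map (algebraMap ℝ ℂ) *ᵥ x))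
      = star x ⬝ᵥ ((Qᵀ * J * Q).map (algebraMap ℝ ℂ) *ᵥ x)
        - star x ⬝ᵥ ((Qᵀ * R * Q).map (algebraMap ℝ ℂ) *ᵥ x) := by
    rw [← dotProduct_sub, ← sub_mulVec, ← smul_eq_mul, ← dotProduct_smul,
      Matrix.map_mul (L := Qᵀ) (M := E), ← mulVec_mulVec, ← mulVec_smul, heig', mulVec_mulVec,
      ← Matrix.map_mul, ← Matrix.map_sub (algebraMap ℝ ℂ) (map_sub _)]
    congr 4
    noncomm_ring
  generalize star x ⬝ᵥ ((Qᵀ * E).map (algebraMap ℝ ℂ) *ᵥ x) = e at *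
  generalize star x ⬝ᵥ ((Qᵀ * R * Q).map (algebraMap ℝ ℂ) *ᵥ x) = r at *
  generalize star x ⬝ᵥ ((Qᵀ * J * Q).map (algebraMap ℝ ℂ) *ᵥ x) = k at *
  obtain ⟨he, hei⟩ := Complex.nonneg_iff.mp hEnn
  obtain ⟨hr, hri⟩ := Complex.nonneg_iff.mp hRnn
  have hre := congrArg Complex.re key
  simp only [Complex.mul_re, Complex.sub_re, hKre, ← hei, mul_zero, sub_zero, zero_sub] at hre
  refine ⟨⟨e.re, lt_of_le_of_ne he fun h => hne (Complex.ext h.symm hei.symm),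
    Complex.ext rfl hei.symm⟩, Complex.ext ?_ ?_⟩
  · simp [hre]
  · simp [← hei, ← hri]
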